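/- arXiv:1908.07403 — 2 statements merged into one kernel-verified Lean document; each statement's English description precedes it below -/
import Mathlib

section
/- Let A : ℝ → ℂ and f : ℝ → ℂ be smooth (infinitely differentiable) and fix x ∈ ℝ. Define the flux-form stencil L_x f(x; h) = (1/h²)·[ −(9/8)·A(x − h/2)·((1/24)f(x−2h) − (9/8)f(x−h) + (9/8)f(x) − (1/24)f(x+h)) + (1/24)·A(x − 3h/2)·(−(11/12)f(x−2h) + (17/24)f(x−h) + (3/8)f(x) − (5/24)f(x+h) + (1/24)f(x+2h)) − (1/24)·A(x + 3h/2)·(−(1/24)f(x−2h) + (5/24)f(x−h) − (3/8)f(x) − (17/24)f(x+h) + (11/12)f(x+2h)) + (9/8)·A(x + h/2)·((1/24)f(x−h) − (9/8)f(x) + (9/8)f(x+h) − (1/24)f(x+2h)) ]. Then L_x f(x; h) = (d/dx)(A·f′)(x) + O(h⁴) as h → 0⁺. -/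
noncomputable section

/-- The flux-form fourth-order stencil `L_x f(x; h)` with coefficient `A`. -/
def Lx (A f : ℝ → ℂ) (x h : ℝ) : ℂ :=
  (1 / (h : ℂ) ^ 2) *
    ( -(9 / 8) * A (x - h / 2) *
        ((1 / 24) * f (x - 2 * h) - (9 / 8) * f (x - h) + (9 / 8) * f x
          - (1 / 24) * f (x + h))
      + (1 / 24) * A (x - 3 * h / 2) *
        (-(11 / 12) * f (x - 2 * h) + (17 / 24) * f (x - h) + (3 / 8) * f x
          - (5 / 24) * f (x + h) + (1 / 24) * f (x + 2 * h))
      - (1 / 24) * A (x + 3 * h / 2) *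
        (-(1 / 24) * f (x - 2 * h) + (5 / 24) * f (x - h) - (3 / 8) * f x
          - (17 / 24) * f (x + h) + (11 / 12) * f (x + 2 * h))
      + (9 / 8) * A (x + h / 2) *
        ((1 / 24) * f (x - h) - (9 / 8) * f x + (9 / 8) * f (x + h)
          - (1 / 24) * f (x + 2 * h)) )

/-!
Taylor expansion turns the order of accuracy of a stencil into moment conditions on its weights.
Before the division by `h²`, the four inner stencils satisfy
`Sⱼ f = h f'(x + θⱼ h) + κⱼ h⁵ f⁽⁵⁾(x) + O(h⁶)`, and the outer weights satisfy
`∑ mⱼ g(x + θⱼ h) = h g'(x) + O(h⁵)` for the flux `g = A f'`. Substituting the first expansion in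
`∑ mⱼ A(x + θⱼ h) Sⱼ f` gives `h² g'(x) + h⁵ (∑ mⱼ κⱼ A(x + θⱼ h)) f⁽⁵⁾(x) + O(h⁶)`, whose middle
term a priori costs one order. But `κⱼ` is even and `mⱼ` is odd under the reflection `θⱼ ↦ -θⱼ`, so
`∑ mⱼ κⱼ = 0` and the sum in that term is `O(h)`.
-/

open Asymptotics Filter Topology Finset
open scoped Nat

lemma exists_forall_norm_le_of_isBigO_pow {E : Type*} [SeminormedAddCommGroup E] {u : ℝ → E}
    {n : ℕ} (hu : u =O[𝓝[>] 0] fun h => h ^ n) :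
    ∃ C δ : ℝ, 0 < C ∧ 0 < δ ∧ ∀ h : ℝ, 0 < h → h < δ → ‖u h‖ ≤ C * h ^ n := by
  obtain ⟨C, hC, hbound⟩ := hu.exists_pos
  obtain ⟨δ, hδ, hsub⟩ := mem_nhdsGT_iff_exists_Ioo_subset.1 hbound.bound
  refine ⟨C, δ, hC, hδ, fun h h0 h1 => ?_⟩
  simpa [abs_of_pos h0] using hsub ⟨h0, h1⟩

section Taylor

variable {E : Type*} [NormedAddCommGroup E] [NormedSpace ℝ E]

lemma isBigO_pow_div_factorial_smul (l : Filter ℝ) (k : ℕ) (v : E) :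
    (fun h : ℝ => (h ^ k / k !) • v) =O[l] fun h => h ^ k :=
  .of_bound (‖v‖ / k !) <| .of_forall fun h => by
    rw [norm_smul, norm_div, RCLike.norm_natCast]
    exact le_of_eq (by ring)

lemma taylor_isBigO {f : ℝ → E} {x : ℝ} {n : ℕ} (hf : ContDiffAt ℝ n f x) :
    (fun h : ℝ => f (x + h) - ∑ k ∈ range n, (h ^ k / k !) • iteratedDeriv k f x)
      =O[𝓝 0] fun h => h ^ n := by
  obtain ⟨r, hr, hball⟩ := Metric.eventually_nhds_iff_ball.1 (hf.eventually (by simp))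
  have hx : x ∈ Metric.ball x r := Metric.mem_ball_self hr
  have hlittle := taylor_isLittleO (convex_ball x r) hx
    fun y hy => (hball y hy).contDiffWithinAt
  rw [Metric.isOpen_ball.nhdsWithin_eq hx] at hlittle
  have hshift : Tendsto (fun h : ℝ => x + h) (𝓝 0) (𝓝 x) :=
    (continuous_const_add x).tendsto' 0 x (add_zero x)
  have hremainder := hlittle.isBigO.comp_tendsto hshift
  simp only [Function.comp_def, add_sub_cancel_left] at hremainder
  have hderiv (k : ℕ) : iteratedDerivWithin k f (Metric.ball x r) x = iteratedDeriv k f x :=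
    iteratedDerivWithin_of_isOpen Metric.isOpen_ball hx
  refine ((isBigO_pow_div_factorial_smul (𝓝 0) n (iteratedDeriv n f x)).add hremainder).congr_left
    fun h => ?_
  simp only [taylor_within_apply, hderiv, add_sub_cancel_left, sum_range_succ, div_eq_inv_mul]
  abel

end Taylor

section Stencil

variable {E ι : Type*} [NormedAddCommGroup E] [NormedSpace ℝ E] [Fintype ι]

/-- The finite-difference stencil with nodes `x + cᵢ h` and weights `wᵢ`, not divided by any power
of the step `h`. -/
def stencil (c w : ι → ℝ) (f : ℝ → E) (x h : ℝ) : E := ∑ i, w i • f (x + c i * h)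

/-- The value of the stencil at `x = 0`, `h = 1` on the monomial `t ^ k`. -/
def stencilMoment (c w : ι → ℝ) (k : ℕ) : ℝ := ∑ i, w i * c i ^ k

/-- The error on the monomial `t ^ k`, at `x = 0` and `h = 1`, of the stencil regarded as an
approximation of the derivative at `θ`. At `k = 0` the truncated exponent `k - 1` is harmless, since
its power is multiplied by `0`. -/
def derivDefect (c w : ι → ℝ) (θ : ℝ) (k : ℕ) : ℝ := stencilMoment c w k - k * θ ^ (k - 1)

variable {c w : ι → ℝ} {θ x : ℝ} {f : ℝ → E} {n : ℕ}

lemma taylor_comp_mul_isBigO (hf : ContDiffAt ℝ n f x) (θ : ℝ) :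
    (fun h : ℝ => f (x + θ * h) - ∑ k ∈ range n, (θ ^ k / k ! * h ^ k) • iteratedDeriv k f x)
      =O[𝓝 0] fun h => h ^ n := by
  have hscale : Tendsto (fun h : ℝ => θ * h) (𝓝 0) (𝓝 0) :=
    (continuous_const_mul θ).tendsto' 0 0 (mul_zero θ)
  have hpow : (fun h : ℝ => (θ * h) ^ n) =O[𝓝 0] fun h => h ^ n := by
    simp_rw [mul_pow]
    exact isBigO_const_mul_self _ _ _
  refine (((taylor_isBigO hf).comp_tendsto hscale).trans hpow).congr_left fun h => ?_
  simp only [Function.comp_apply, mul_pow, div_mul_eq_mul_div]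

lemma stencil_sub_sum_stencilMoment_isBigO (hf : ContDiffAt ℝ n f x) (c w : ι → ℝ) :
    (fun h => stencil c w f x h -
        ∑ k ∈ range n, (stencilMoment c w k / k ! * h ^ k) • iteratedDeriv k f x)
      =O[𝓝 0] fun h => h ^ n := by
  have hterms := IsBigO.sum (s := univ) fun i _ =>
    (taylor_comp_mul_isBigO hf (c i)).const_smul_left (w i)
  refine hterms.congr_left fun h => ?_
  simp only [stencil, stencilMoment, Finset.sum_apply, Pi.smul_apply, smul_sub, sum_sub_distrib,
    smul_sum, sum_div, sum_mul, sum_smul, smul_smul]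
  rw [sum_comm]
  simp only [mul_assoc, mul_div_assoc]

lemma stencil_isBigO_of_stencilMoment_zero (hf : ContDiffAt ℝ 1 f x)
    (hw : stencilMoment c w 0 = 0) : stencil c w f x =O[𝓝 0] fun h => h := by
  simpa [hw] using stencil_sub_sum_stencilMoment_isBigO (n := 1) hf c w

lemma stencil_sub_deriv_sub_sum_derivDefect_isBigO (hf : ContDiffAt ℝ (n + 1) f x)
    (c w : ι → ℝ) (θ : ℝ) :
    (fun h => stencil c w f x h - h • deriv f (x + θ * h) -
        ∑ k ∈ range (n + 1), (derivDefect c w θ k / k ! * h ^ k) • iteratedDeriv k f x)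
      =O[𝓝 0] fun h => h ^ (n + 1) := by
  have hstencil := stencil_sub_sum_stencilMoment_isBigO (n := n + 1) (mod_cast hf) c w
  have hderiv := (isBigO_refl (fun h : ℝ => h) (𝓝 0)).smul
    (taylor_comp_mul_isBigO (hf.derivWithin le_rfl) θ)
  simp only [smul_eq_mul, ← pow_succ'] at hderiv
  have hcoeff (k : ℕ) (h : ℝ) :
      (((k + 1 : ℕ) : ℝ) * θ ^ k) / (k + 1)! * h ^ (k + 1) = h * (θ ^ k / k ! * h ^ k) := by
    rw [Nat.factorial_succ]
    push_cast
    field_simp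
    ring
  refine (hstencil.sub hderiv).congr_left fun h => ?_
  simp only [derivDefect, sub_div, sub_mul, sub_smul, sum_sub_distrib, smul_sub, smul_sum,
    smul_smul]
  rw [sum_range_succ' (fun k => (((k : ℝ) * θ ^ (k - 1)) / k ! * h ^ k) • iteratedDeriv k f x)]
  simp only [Nat.add_sub_cancel, hcoeff, iteratedDeriv_succ', Nat.cast_zero, zero_mul, zero_div,
    zero_smul, add_zero]
  abel

lemma stencil_sub_deriv_isBigO (hf : ContDiffAt ℝ (n + 1) f x)
    (hexact : ∀ k ≤ n, derivDefect c w θ k = 0) :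
    (fun h => stencil c w f x h - h • deriv f (x + θ * h)) =O[𝓝 0] fun h => h ^ (n + 1) := by
  refine (stencil_sub_deriv_sub_sum_derivDefect_isBigO hf c w θ).congr_left fun h => ?_
  rw [sum_eq_zero fun k hk => by
    rw [hexact k (mem_range_succ_iff.1 hk), zero_div, zero_mul, zero_smul], sub_zero]

lemma stencil_sub_deriv_sub_leading_isBigO (hf : ContDiffAt ℝ (n + 2) f x)
    (hexact : ∀ k ≤ n, derivDefect c w θ k = 0) :
    (fun h => stencil c w f x h - h • deriv f (x + θ * h) -
        (derivDefect c w θ (n + 1) / (n + 1)! * h ^ (n + 1)) • iteratedDeriv (n + 1) f x)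
      =O[𝓝 0] fun h => h ^ (n + 2) := by
  have hf' : ContDiffAt ℝ ((n + 1 : ℕ) + 1) f x := by
    convert hf using 1
    push_cast
    ring
  refine (stencil_sub_deriv_sub_sum_derivDefect_isBigO hf' c w θ).congr_left fun h => ?_
  rw [sum_range_succ, sum_eq_zero fun k hk => by
    rw [hexact k (mem_range_succ_iff.1 hk), zero_div, zero_mul, zero_smul], zero_add]

end Stencil

section FluxStencil

variable {𝔸 ι κ : Type*} [NormedRing 𝔸] [NormedAlgebra ℝ 𝔸] [Fintype ι] [Fintype κ]

/-- The flux-form stencil for `(A f')'`: the outer stencil with nodes `θ` and weights `m`, applied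
to the flux `A f'`, in which `f'` at the `j`-th outer node is replaced by the inner stencil with
nodes `c` and weights `w j`. It is not divided by `h ^ 2`. -/
def fluxStencil (θ m : ι → ℝ) (c : κ → ℝ) (w : ι → κ → ℝ) (A f : ℝ → 𝔸) (x h : ℝ) : 𝔸 :=
  ∑ j, m j • (A (x + θ j * h) * stencil c (w j) f x h)

variable {θ m : ι → ℝ} {c : κ → ℝ} {w : ι → κ → ℝ} {A f : ℝ → 𝔸} {x : ℝ} {n : ℕ}

lemma fluxStencil_sub_stencil_flux_isBigO (hA : ContDiffAt ℝ 1 A x)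
    (hf : ContDiffAt ℝ (n + 2) f x)
    (hinner : ∀ j, ∀ k ≤ n, derivDefect c (w j) (θ j) k = 0)
    (hcancel : ∑ j, m j * derivDefect c (w j) (θ j) (n + 1) = 0) :
    (fun h => fluxStencil θ m c w A f x h - h • stencil θ m (fun t => A t * deriv f t) x h)
      =O[𝓝 0] fun h => h ^ (n + 2) := by
  let d (j : ι) : ℝ := derivDefect c (w j) (θ j) (n + 1)
  have hbounded (j : ι) : (fun h : ℝ => A (x + θ j * h)) =O[𝓝 0] fun _ => (1 : ℝ) := by
    have hnode : Tendsto (fun h : ℝ => x + θ j * h) (𝓝 0) (𝓝 x) :=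
      Continuous.tendsto' (by fun_prop) 0 x (by simp)
    exact (hA.continuousAt.tendsto.comp hnode).isBigO_one ℝ
  have hremainder := IsBigO.sum (s := univ) fun j _ =>
    ((hbounded j).mul (stencil_sub_deriv_sub_leading_isBigO hf (hinner j))).const_smul_left (m j)
  have hmoment : stencilMoment θ (fun j => m j * d j) 0 = 0 := by
    simpa [stencilMoment] using hcancel
  have hleading : (fun h => stencil θ (fun j => m j * d j) A x h *
      ((h ^ (n + 1) / (n + 1)!) • iteratedDeriv (n + 1) f x)) =O[𝓝 0] fun h => h * h ^ (n + 1) :=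
    (stencil_isBigO_of_stencilMoment_zero hA hmoment).mul <|
      isBigO_pow_div_factorial_smul _ _ _
  simp only [one_mul] at hremainder
  simp only [← pow_succ'] at hleading
  refine (hremainder.add hleading).congr_left fun h => ?_
  simp only [fluxStencil, stencil, Finset.sum_apply, Pi.smul_apply, smul_sum, sum_mul,
    ← sum_add_distrib, ← sum_sub_distrib]
  refine sum_congr rfl fun j _ => ?_
  simp only [d, mul_sub, smul_sub, mul_smul_comm, smul_mul_assoc, smul_smul]
  module

theorem fluxStencil_sub_deriv_flux_isBigO (hA : ContDiffAt ℝ (n + 1) A x)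
    (hf : ContDiffAt ℝ (n + 2) f x)
    (houter : ∀ k ≤ n, derivDefect θ m 0 k = 0)
    (hinner : ∀ j, ∀ k ≤ n, derivDefect c (w j) (θ j) k = 0)
    (hcancel : ∑ j, m j * derivDefect c (w j) (θ j) (n + 1) = 0) :
    (fun h => fluxStencil θ m c w A f x h - h ^ 2 • deriv (fun t => A t * deriv f t) x)
      =O[𝓝 0] fun h => h ^ (n + 2) := by
  have hflux : ContDiffAt ℝ (n + 1) (fun t => A t * deriv f t) x :=
    hA.mul (hf.derivWithin (by rw [add_assoc, one_add_one_eq_two]))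
  have houter_error := (isBigO_refl (fun h : ℝ => h) (𝓝 0)).smul
    (stencil_sub_deriv_isBigO hflux houter)
  simp only [smul_eq_mul, ← pow_succ'] at houter_error
  have hinner_error :=
    fluxStencil_sub_stencil_flux_isBigO (hA.of_le le_add_self) hf hinner hcancel
  refine (hinner_error.add houter_error).congr_left fun h => ?_
  rw [zero_mul, add_zero]
  module

end FluxStencil

section FourthOrder

/-- The half-grid nodes, in units of `h` relative to `x`, at which the flux is sampled. -/
def halfNodes : Fin 4 → ℝ := ![-3 / 2, -1 / 2, 1 / 2, 3 / 2]

/-- The weights of the fourth-order midpoint formula for the derivative of the flux. -/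
def midpointWeights : Fin 4 → ℝ := ![1 / 24, -9 / 8, 9 / 8, -1 / 24]

/-- The grid nodes, in units of `h` relative to `x`, at which `f` is sampled. -/
def gridNodes : Fin 5 → ℝ := ![-2, -1, 0, 1, 2]

/-- Row `j` holds the weights on `gridNodes` of the approximation of `f'` at `halfNodes j`. -/
def fluxWeights : Fin 4 → Fin 5 → ℝ :=
  ![![-11 / 12, 17 / 24, 3 / 8, -5 / 24, 1 / 24],
    ![1 / 24, -9 / 8, 9 / 8, -1 / 24, 0],
    ![0, 1 / 24, -9 / 8, 9 / 8, -1 / 24],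
    ![-1 / 24, 5 / 24, -3 / 8, -17 / 24, 11 / 12]]

lemma derivDefect_midpointWeights_eq_zero :
    ∀ k ≤ 4, derivDefect halfNodes midpointWeights 0 k = 0 := by
  intro k hk
  interval_cases k <;>
    norm_num [derivDefect, stencilMoment, halfNodes, midpointWeights, Fin.sum_univ_succ]

lemma derivDefect_fluxWeights_eq_zero (j : Fin 4) :
    ∀ k ≤ 4, derivDefect gridNodes (fluxWeights j) (halfNodes j) k = 0 := by
  intro k hk
  fin_cases j <;> interval_cases k <;>
    norm_num [derivDefect, stencilMoment, halfNodes, gridNodes, fluxWeights, Fin.sum_univ_succ]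

lemma sum_midpointWeights_mul_derivDefect_five :
    ∑ j, midpointWeights j * derivDefect gridNodes (fluxWeights j) (halfNodes j) 5 = 0 := by
  norm_num [derivDefect, stencilMoment, halfNodes, midpointWeights, gridNodes, fluxWeights,
    Fin.sum_univ_succ]

lemma Lx_eq_fluxStencil_div_sq (A f : ℝ → ℂ) (x h : ℝ) :
    Lx A f x h = fluxStencil halfNodes midpointWeights gridNodes fluxWeights A f x h / h ^ 2 := by
  simp only [Lx, fluxStencil, stencil, halfNodes, midpointWeights, gridNodes, fluxWeights,
    Fin.sum_univ_four, Fin.sum_univ_five, Matrix.cons_val, Complex.real_smul]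
  push_cast
  ring_nf

theorem flux_stencil_fourth_order_general {A f : ℝ → ℂ} {x : ℝ} (hA : ContDiffAt ℝ 5 A x)
    (hf : ContDiffAt ℝ 6 f x) :
    (fun h => Lx A f x h - deriv (fun t => A t * deriv f t) x) =O[𝓝[≠] 0] fun h => h ^ 4 := by
  have hflux := (fluxStencil_sub_deriv_flux_isBigO (n := 4) (by exact_mod_cast hA)
    (by exact_mod_cast hf) derivDefect_midpointWeights_eq_zero derivDefect_fluxWeights_eq_zero
    sum_midpointWeights_mul_derivDefect_five).mono (nhdsWithin_le_nhds (s := {0}ᶜ))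
  have hdiv := (isBigO_refl (fun h : ℝ => (h ^ 2)⁻¹) (𝓝[≠] 0)).smul hflux
  refine hdiv.congr' ?_ ?_ <;> filter_upwards [self_mem_nhdsWithin] with h (hh : h ≠ 0)
  · rw [Lx_eq_fluxStencil_div_sq, smul_sub, inv_smul_smul₀ (pow_ne_zero 2 hh), Complex.real_smul]
    push_cast
    ring
  · rw [smul_eq_mul]
    field_simp

end FourthOrder

/-- the flux-form stencil approximates (A f')' with fourth-order accuracy. -/
theorem flux_stencil_fourth_order
    (A f : ℝ → ℂ) (hA : ContDiff ℝ (⊤ : ℕ∞) A) (hf : ContDiff ℝ (⊤ : ℕ∞) f) (x : ℝ) :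
    ∃ C δ : ℝ, 0 < C ∧ 0 < δ ∧ ∀ h : ℝ, 0 < h → h < δ →
      ‖Lx A f x h - deriv (fun t => A t * deriv f t) x‖ ≤ C * h ^ 4 := by
  exact exists_forall_norm_le_of_isBigO_pow <|
    (flux_stencil_fourth_order_general (hA.contDiffAt.of_le (by norm_cast))
      (hf.contDiffAt.of_le (by norm_cast))).mono (nhdsGT_le_nhdsNE 0)

end
end

section
/- Fix γ > 0 and real (or complex) parameters c₁, c₂, c₃, c₄ with c₁ + c₂ + c₃ + c₄ = 1. Let Q : ℝ² → ℂ be smooth (infinitely differentiable) and fix (x, z) ∈ ℝ². Define I*Q(x, z; h) = c₁·Q(x, z) + c₂·I⁽²⁾Q(x, z; h) + c₃·I⁽³⁾Q(x, z; h) + c₄·I⁽⁴⁾Q(x, z; h), where I⁽²⁾Q = (1/3)·[Q(x−h, z) + Q(x+h, z) + Q(x, z−γh) + Q(x, z+γh)] − (1/12)·[Q(x−2h, z) + Q(x+2h, z) + Q(x, z−2γh) + Q(x, z+2γh)], I⁽³⁾Q = (1/3)·[Q(x−h, z−γh) + Q(x+h, z+γh) + Q(x−h, z+γh) + Q(x+h,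 z−γh)] − (1/12)·[Q(x−2h, z−2γh) + Q(x+2h, z+2γh) + Q(x−2h, z+2γh) + Q(x+2h, z−2γh)], and I⁽⁴⁾Q = (1/36)·[Q(x−2h, z−2γh) + Q(x−2h, z+2γh) + Q(x+2h, z−2γh) + Q(x+2h, z+2γh)] − (1/9)·[Q(x−h, z−2γh) + Q(x+h, z−2γh) + Q(x−2h, z−γh) + Q(x+2h, z−γh) + Q(x−h, z+2γh) + Q(x+h, z+2γh) + Q(x−2h, z+γh) + Q(x+2h, z+γh)] + (4/9)·[Q(x−h, z−γh) + Q(x+h, z−γh) + Q(x−h, z+γh) + Q(x+h, z+γh)]. Then I*Q(x, z; h) = Q(x, z) − h⁴·[((c₂ + 2c₃ + 2c₄)/12)·(∂⁴Q/∂x⁴ + γ⁴·∂⁴Q/∂z⁴) + c₃·γ²·∂⁴Q/∂x²∂z²](x, z) + O(h⁶) as h → 0⁺. -/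
noncomputable section

/-- The orthogonal-neighbor mass-lumping operator `I⁽²⁾`. -/
def I2 (γ : ℝ) (Q : ℝ × ℝ → ℂ) (x z h : ℝ) : ℂ :=
  (1 / 3) * (Q (x - h, z) + Q (x + h, z) + Q (x, z - γ * h) + Q (x, z + γ * h))
    - (1 / 12) * (Q (x - 2 * h, z) + Q (x + 2 * h, z)
        + Q (x, z - 2 * γ * h) + Q (x, z + 2 * γ * h))

/-- The diagonal-neighbor mass-lumping operator `I⁽³⁾`. -/
def I3 (γ : ℝ) (Q : ℝ × ℝ → ℂ) (x z h : ℝ) : ℂ :=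
  (1 / 3) * (Q (x - h, z - γ * h) + Q (x + h, z + γ * h)
      + Q (x - h, z + γ * h) + Q (x + h, z - γ * h))
    - (1 / 12) * (Q (x - 2 * h, z - 2 * γ * h) + Q (x + 2 * h, z + 2 * γ * h)
        + Q (x - 2 * h, z + 2 * γ * h) + Q (x + 2 * h, z - 2 * γ * h))

/-- The 16-point ring mass-lumping operator `I⁽⁴⁾`. -/
def I4 (γ : ℝ) (Q : ℝ × ℝ → ℂ) (x z h : ℝ) : ℂ :=
  (1 / 36) * (Q (x - 2 * h, z - 2 * γ * h) + Q (x - 2 * h, z + 2 * γ * h)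
      + Q (x + 2 * h, z - 2 * γ * h) + Q (x + 2 * h, z + 2 * γ * h))
    - (1 / 9) * (Q (x - h, z - 2 * γ * h) + Q (x + h, z - 2 * γ * h)
        + Q (x - 2 * h, z - γ * h) + Q (x + 2 * h, z - γ * h)
        + Q (x - h, z + 2 * γ * h) + Q (x + h, z + 2 * γ * h)
        + Q (x - 2 * h, z + γ * h) + Q (x + 2 * h, z + γ * h))
    + (4 / 9) * (Q (x - h, z - γ * h) + Q (x + h, z - γ * h)
        + Q (x - h, z + γ * h) + Q (x + h, z + γ * h))

/-- The weighted mass-lumping operator `I*` of the point-weighting 25-point scheme. -/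
def Istar (γ c₁ c₂ c₃ c₄ : ℝ) (Q : ℝ × ℝ → ℂ) (x z h : ℝ) : ℂ :=
  (c₁ : ℂ) * Q (x, z) + (c₂ : ℂ) * I2 γ Q x z h + (c₃ : ℂ) * I3 γ Q x z h
    + (c₄ : ℂ) * I4 γ Q x z h

/-- ∂⁴Q/∂x⁴ at (x, z). -/
def Dx4 (Q : ℝ × ℝ → ℂ) (x z : ℝ) : ℂ := iteratedDeriv 4 (fun t => Q (t, z)) x

/-- ∂⁴Q/∂z⁴ at (x, z). -/
def Dz4 (Q : ℝ × ℝ → ℂ) (x z : ℝ) : ℂ := iteratedDeriv 4 (fun t => Q (x, t)) z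

/-- ∂⁴Q/∂x²∂z² at (x, z). -/
def Dx2z2 (Q : ℝ × ℝ → ℂ) (x z : ℝ) : ℂ :=
  iteratedDeriv 2 (fun t => iteratedDeriv 2 (fun s => Q (t, s)) z) x

/-!
Each of `I⁽²⁾`, `I⁽³⁾`, `I⁽⁴⁾` is a linear combination of sums of `Q` over the four corners of a
rectangle centred at `(x, z)` with half-sides `a h` and `b h`. Such a sum is invariant under both
reflections, so only even mixed derivatives survive in its Taylor expansion:
`4 Q + 2 h² (a² Q_xx + b² Q_zz) + (h⁴ / 6) (a⁴ Q_xxxx + 6 a² b² Q_xxzz + b⁴ Q_zzzz) + O(h⁶)`.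
The weights of the scheme cancel the `h²` terms, and the `h⁴` terms are read off.
-/

open Asymptotics Filter Finset Topology
open scoped Nat

lemma exists_pos_bound_of_isBigO_pow {E : Type*} [Norm E] {g : ℝ → E} {n : ℕ}
    (hg : g =O[𝓝[>] 0] fun h ↦ h ^ n) :
    ∃ C δ : ℝ, 0 < C ∧ 0 < δ ∧ ∀ h : ℝ, 0 < h → h < δ → ‖g h‖ ≤ C * h ^ n := by
  obtain ⟨C, hC, hbound⟩ := hg.exists_pos
  obtain ⟨δ, hδ, hsubset⟩ := mem_nhdsGT_iff_exists_Ioo_subset.mp hbound.bound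
  refine ⟨C, δ, hC, hδ, fun h hpos hlt ↦ ?_⟩
  simpa [abs_of_pos hpos] using hsubset ⟨hpos, hlt⟩

section TaylorExpansion

variable {E : Type*} [NormedAddCommGroup E] [NormedSpace ℝ E] {f : ℝ → E}

lemma taylor_isBigO_pow {n : ℕ} (hf : ContDiff ℝ n f) (x₀ : ℝ) :
    (fun t ↦ f (x₀ + t) - ∑ k ∈ range n, ((k ! : ℝ)⁻¹ * t ^ k) • iteratedDeriv k f x₀)
      =O[𝓝 0] fun t ↦ t ^ n := by
  have tendsto_translate : Tendsto (fun t ↦ x₀ + t) (𝓝 0) (𝓝 x₀) := by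
    simpa using (continuous_const_add x₀).tendsto 0
  have remainder := (taylor_isLittleO_univ (x₀ := x₀) hf).isBigO.comp_tendsto tendsto_translate
  have last_term : (fun t : ℝ ↦ ((n ! : ℝ)⁻¹ * t ^ n) • iteratedDeriv n f x₀)
      =O[𝓝 0] fun t ↦ t ^ n :=
    .of_bound (‖(n ! : ℝ)⁻¹‖ * ‖iteratedDeriv n f x₀‖) <| .of_forall fun t ↦ by
      rw [norm_smul, norm_mul, mul_right_comm]
  have shifted : (fun t ↦ f (x₀ + t) -
      ∑ k ∈ range (n + 1), ((k ! : ℝ)⁻¹ * t ^ k) • iteratedDeriv k f x₀) =O[𝓝 0] fun t ↦ t ^ n := by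
    simpa only [Function.comp_def, taylor_within_apply, add_sub_cancel_left,
      iteratedDerivWithin_univ] using remainder
  refine (shifted.add last_term).congr_left fun t ↦ ?_
  rw [sum_range_succ]
  abel

lemma sum_taylor_add_sum_taylor_neg (d : ℕ → E) (n : ℕ) (t : ℝ) :
    ∑ k ∈ range (2 * n), ((k ! : ℝ)⁻¹ * t ^ k) • d k
        + ∑ k ∈ range (2 * n), ((k ! : ℝ)⁻¹ * (-t) ^ k) • d k
      = ∑ k ∈ range n, (2 * ((2 * k)! : ℝ)⁻¹ * t ^ (2 * k)) • d (2 * k) := by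
  induction n with
  | zero => simp
  | succ n ih =>
    rw [mul_add_one, sum_range_succ, sum_range_succ, sum_range_succ, sum_range_succ,
      sum_range_succ, ← ih, (even_two_mul n).neg_pow, (odd_two_mul_add_one n).neg_pow]
    module

lemma taylor_add_reflection_isBigO_pow {n : ℕ} (hf : ContDiff ℝ (2 * n : ℕ) f) (x₀ : ℝ) :
    (fun t ↦ f (x₀ + t) + f (x₀ - t)
        - ∑ k ∈ range n, (2 * ((2 * k)! : ℝ)⁻¹ * t ^ (2 * k)) • iteratedDeriv (2 * k) f x₀)
      =O[𝓝 0] fun t ↦ t ^ (2 * n) := by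
  have forward := taylor_isBigO_pow hf x₀
  have backward := forward.comp_tendsto (k := fun t : ℝ ↦ -t) (by simpa using tendsto_neg (0 : ℝ))
  simp only [Function.comp_def, (even_two_mul n).neg_pow] at backward
  refine (forward.add backward).congr_left fun t ↦ ?_
  rw [← sum_taylor_add_sum_taylor_neg (iteratedDeriv · f x₀), sub_eq_add_neg x₀]
  abel

end TaylorExpansion

section DirectionalDerivative

variable {V E : Type*} [NormedAddCommGroup V] [NormedSpace ℝ V]
  [NormedAddCommGroup E] [NormedSpace ℝ E] {F : V → E}

/-- The directional derivative along `v` as an operator on functions, which makes it possible to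
iterate it and to compose derivatives in different directions. -/
def dirDeriv (v : V) (F : V → E) : V → E := fun p ↦ lineDeriv ℝ F p v

lemma dirDeriv_eq_fderiv (hF : Differentiable ℝ F) (v : V) :
    dirDeriv v F = fun p ↦ fderiv ℝ F p v :=
  funext fun p ↦ (hF p).lineDeriv_eq_fderiv

lemma deriv_comp_line (F : V → E) (p v : V) (t : ℝ) :
    deriv (fun s : ℝ ↦ F (p + s • v)) t = dirDeriv v F (p + t • v) := by
  have recenter := deriv_comp_const_add (fun s : ℝ ↦ F (p + s • v)) t 0
  simpa only [dirDeriv, lineDeriv, add_zero, add_smul, add_assoc] using recenter.symm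

lemma iteratedDeriv_comp_line (n : ℕ) (F : V → E) (p v : V) :
    iteratedDeriv n (fun s : ℝ ↦ F (p + s • v)) = fun t ↦ (dirDeriv v)^[n] F (p + t • v) := by
  induction n with
  | zero => simp
  | succ n ih =>
    ext t
    rw [iteratedDeriv_succ, ih, deriv_comp_line, Function.iterate_succ_apply']

lemma dirDeriv_smul_add_smul (hF : Differentiable ℝ F) (a b : ℝ) (u w p : V) :
    dirDeriv (a • u + b • w) F p = a • dirDeriv u F p + b • dirDeriv w F p := by
  simp only [dirDeriv_eq_fderiv hF, map_add, map_smul]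

lemma dirDeriv_sum_const_smul {ι : Type*} (s : Finset ι) (c : ι → ℝ) {G : ι → V → E}
    (hG : ∀ i ∈ s, Differentiable ℝ (G i)) (v p : V) :
    dirDeriv v (fun q ↦ ∑ i ∈ s, c i • G i q) p = ∑ i ∈ s, c i • dirDeriv v (G i) p := by
  have differentiable_terms : ∀ i ∈ s, Differentiable ℝ fun q ↦ c i • G i q :=
    fun i hi ↦ (hG i hi).const_smul (c i)
  simp only [dirDeriv_eq_fderiv (.fun_sum differentiable_terms)]
  rw [fderiv_fun_sum fun i hi ↦ differentiable_terms i hi p, _root_.sum_apply]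
  refine sum_congr rfl fun i hi ↦ ?_
  rw [fderiv_fun_const_smul (hG i hi p), dirDeriv_eq_fderiv (hG i hi), smul_apply]

lemma contDiff_dirDeriv {m : WithTop ℕ∞} (hF : ContDiff ℝ (m + 1) F) (v : V) :
    ContDiff ℝ m (dirDeriv v F) := by
  rw [dirDeriv_eq_fderiv (hF.differentiable (by simp))]
  exact (hF.fderiv_right le_rfl).clm_apply contDiff_const

lemma contDiff_iterate_dirDeriv {m : WithTop ℕ∞} {n : ℕ} (hF : ContDiff ℝ (m + n) F) (v : V) :
    ContDiff ℝ m ((dirDeriv v)^[n] F) := by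
  induction n generalizing m with
  | zero => simpa using hF
  | succ n ih =>
    rw [Function.iterate_succ_apply']
    refine contDiff_dirDeriv (ih ?_) v
    rwa [add_right_comm, add_assoc, ← Nat.cast_succ]

lemma dirDeriv_comm (hF : ContDiff ℝ 2 F) (u w : V) :
    dirDeriv u (dirDeriv w F) = dirDeriv w (dirDeriv u F) := by
  have fderiv_diff : Differentiable ℝ (fderiv ℝ F) :=
    (hF.fderiv_right (m := 1) (by norm_num)).differentiable one_ne_zero
  have second_derivative (v v' : V) :
      dirDeriv v (dirDeriv v' F) = fun p ↦ fderiv ℝ (fderiv ℝ F) p v v' := by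
    rw [dirDeriv_eq_fderiv (hF.differentiable two_ne_zero),
      dirDeriv_eq_fderiv (fderiv_diff.clm_apply (differentiable_const v'))]
    ext p
    simp [fderiv_clm_apply (fderiv_diff p) (differentiableAt_const v')]
  rw [second_derivative, second_derivative]
  ext p
  exact (hF.contDiffAt.isSymmSndFDerivAt (by simp)).eq u w

lemma dirDeriv_iterate_comm {n : ℕ} (hF : ContDiff ℝ (n + 1) F) (u w : V) :
    dirDeriv w ((dirDeriv u)^[n] F) = (dirDeriv u)^[n] (dirDeriv w F) := by
  induction n with
  | zero => rfl
  | succ n ih =>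
    have iterate_contDiff : ContDiff ℝ 2 ((dirDeriv u)^[n] F) :=
      contDiff_iterate_dirDeriv (hF.of_le (by norm_cast; lia)) u
    rw [Function.iterate_succ_apply', Function.iterate_succ_apply', dirDeriv_comm iterate_contDiff,
      ih (hF.of_le (by norm_cast; lia))]

/-- The mixed derivative `∂ᵤⁱ ∂_wʲ F`, with the derivatives along `w` taken first. -/
def mixedDeriv (u w : V) (i j : ℕ) (F : V → E) : V → E := (dirDeriv u)^[i] ((dirDeriv w)^[j] F)

lemma contDiff_mixedDeriv {m : WithTop ℕ∞} {i j : ℕ} (hF : ContDiff ℝ (m + (i + j : ℕ)) F)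
    (u w : V) : ContDiff ℝ m (mixedDeriv u w i j F) := by
  refine contDiff_iterate_dirDeriv (contDiff_iterate_dirDeriv ?_ w) u
  rwa [add_assoc, ← Nat.cast_add]

lemma dirDeriv_left_mixedDeriv (u w : V) (i j : ℕ) (F : V → E) :
    dirDeriv u (mixedDeriv u w i j F) = mixedDeriv u w (i + 1) j F :=
  (Function.iterate_succ_apply' _ _ _).symm

lemma dirDeriv_right_mixedDeriv {i j : ℕ} (hF : ContDiff ℝ (i + j + 1 : ℕ) F) (u w : V) :
    dirDeriv w (mixedDeriv u w i j F) = mixedDeriv u w i (j + 1) F := by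
  have iterate_contDiff : ContDiff ℝ (i + 1) ((dirDeriv w)^[j] F) :=
    contDiff_iterate_dirDeriv (by rwa [add_right_comm, ← Nat.cast_add, ← Nat.cast_succ]) w
  rw [mixedDeriv, dirDeriv_iterate_comm iterate_contDiff, mixedDeriv,
    Function.iterate_succ_apply' _ j]

theorem iterate_dirDeriv_smul_add_smul {n : ℕ} (hF : ContDiff ℝ n F) (a b : ℝ) (u w : V) :
    (dirDeriv (a • u + b • w))^[n] F = fun p ↦ ∑ ij ∈ antidiagonal n,
      n.choose ij.1 • (a ^ ij.1 * b ^ ij.2) • mixedDeriv u w ij.1 ij.2 F p := by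
  induction n with
  | zero => simp [mixedDeriv]
  | succ n ih =>
    have differentiable_mixed : ∀ ij ∈ antidiagonal n,
        Differentiable ℝ (mixedDeriv u w ij.1 ij.2 F) := fun ij hij ↦
      (contDiff_mixedDeriv (m := 1) (by
        rwa [mem_antidiagonal.mp hij, add_comm, ← Nat.cast_succ]) u w).differentiable one_ne_zero
    ext p
    rw [Function.iterate_succ_apply', ih (hF.of_le (by simp)),
      sum_antidiagonal_choose_succ_nsmul fun i j ↦ (a ^ i * b ^ j) • mixedDeriv u w i j F p,
      ← sum_add_distrib]
    simp only [← Nat.cast_smul_eq_nsmul ℝ, smul_smul]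
    rw [dirDeriv_sum_const_smul _ _ differentiable_mixed]
    refine sum_congr rfl fun ⟨i, j⟩ hij ↦ ?_
    obtain rfl := mem_antidiagonal.mp hij
    rw [dirDeriv_smul_add_smul (differentiable_mixed _ hij), dirDeriv_left_mixedDeriv,
      dirDeriv_right_mixedDeriv hF, Nat.choose_symm_add]
    module

lemma iterate_dirDeriv_two_add_sub (hF : ContDiff ℝ 2 F) (a b : ℝ) (u w p : V) :
    (dirDeriv (a • u + b • w))^[2] F p + (dirDeriv (a • u + (-b) • w))^[2] F p
      = (2 * a ^ 2) • mixedDeriv u w 2 0 F p + (2 * b ^ 2) • mixedDeriv u w 0 2 F p := by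
  simp only [iterate_dirDeriv_smul_add_smul (n := 2) hF, Nat.sum_antidiagonal_eq_sum_range_succ_mk,
    sum_range_succ, sum_range_zero, Nat.choose, Nat.reduceAdd, Nat.reduceSub]
  module

lemma iterate_dirDeriv_four_add_sub (hF : ContDiff ℝ 4 F) (a b : ℝ) (u w p : V) :
    (dirDeriv (a • u + b • w))^[4] F p + (dirDeriv (a • u + (-b) • w))^[4] F p
      = (2 * a ^ 4) • mixedDeriv u w 4 0 F p + (12 * a ^ 2 * b ^ 2) • mixedDeriv u w 2 2 F p
        + (2 * b ^ 4) • mixedDeriv u w 0 4 F p := by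
  simp only [iterate_dirDeriv_smul_add_smul (n := 4) hF, Nat.sum_antidiagonal_eq_sum_range_succ_mk,
    sum_range_succ, sum_range_zero, Nat.choose, Nat.reduceAdd, Nat.reduceSub]
  module

lemma add_reflection_along_line_isBigO_pow {n : ℕ} (hF : ContDiff ℝ (2 * n : ℕ) F) (p v : V) :
    (fun h : ℝ ↦ F (p + h • v) + F (p - h • v)
        - ∑ k ∈ range n, (2 * ((2 * k)! : ℝ)⁻¹ * h ^ (2 * k)) • (dirDeriv v)^[2 * k] F p)
      =O[𝓝 0] fun h ↦ h ^ (2 * n) := by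
  have line_contDiff : ContDiff ℝ (2 * n : ℕ) fun t : ℝ ↦ F (p + t • v) :=
    hF.comp (by fun_prop)
  simpa only [iteratedDeriv_comp_line, zero_add, zero_sub, zero_smul, add_zero, neg_smul,
    ← sub_eq_add_neg] using taylor_add_reflection_isBigO_pow line_contDiff 0

/-- The sum of `F` over the corners of the parallelogram centred at `p` with half-sides
`u` and `w`, each diagonal contributing one pair. -/
def cornerSum (F : V → E) (p u w : V) : E :=
  (F (p + (u + w)) + F (p - (u + w))) + (F (p + (u - w)) + F (p - (u - w)))

/-- The error of the Taylor expansion, up to and including order four in `h`, of the corner sum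
with half-sides `a h u` and `b h w`. -/
def cornerRemainder (F : V → E) (p u w : V) (a b h : ℝ) : E :=
  cornerSum F p ((a * h) • u) ((b * h) • w)
    - ((4 : ℝ) • F p
      + (2 * h ^ 2) • (a ^ 2 • mixedDeriv u w 2 0 F p + b ^ 2 • mixedDeriv u w 0 2 F p)
      + (h ^ 4 / 6) • (a ^ 4 • mixedDeriv u w 4 0 F p
        + (6 * a ^ 2 * b ^ 2) • mixedDeriv u w 2 2 F p + b ^ 4 • mixedDeriv u w 0 4 F p))

theorem cornerRemainder_isBigO (hF : ContDiff ℝ 6 F) (p u w : V) (a b : ℝ) :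
    cornerRemainder F p u w a b =O[𝓝 0] fun h ↦ h ^ 6 := by
  have diagonals := (add_reflection_along_line_isBigO_pow (n := 3) hF p (a • u + b • w)).add
    (add_reflection_along_line_isBigO_pow (n := 3) hF p (a • u + (-b) • w))
  refine diagonals.congr_left fun h ↦ ?_
  have diagonal_add : (a * h) • u + (b * h) • w = h • (a • u + b • w) := by module
  have diagonal_sub : (a * h) • u - (b * h) • w = h • (a • u + (-b) • w) := by module
  have second_order := iterate_dirDeriv_two_add_sub (hF.of_le (by norm_num)) a b u w p
  have fourth_order := iterate_dirDeriv_four_add_sub (hF.of_le (by norm_num)) a b u w p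
  rw [cornerRemainder, cornerSum, diagonal_add, diagonal_sub]
  simp only [sum_range_succ, sum_range_zero, Nat.reduceMul, mul_zero, mul_one, Nat.factorial,
    Function.iterate_zero, id]
  push_cast
  linear_combination (norm := module) (-h ^ 2) • second_order - (h ^ 4 / 12) • fourth_order

end DirectionalDerivative

section MassLumping

lemma Dx4_eq_mixedDeriv (Q : ℝ × ℝ → ℂ) (x z : ℝ) :
    Dx4 Q x z = mixedDeriv (1, 0) (0, 1) 4 0 Q (x, z) := by
  simpa [Dx4, mixedDeriv] using congrFun (iteratedDeriv_comp_line 4 Q (0, z) (1, 0)) x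

lemma Dz4_eq_mixedDeriv (Q : ℝ × ℝ → ℂ) (x z : ℝ) :
    Dz4 Q x z = mixedDeriv (1, 0) (0, 1) 0 4 Q (x, z) := by
  simpa [Dz4, mixedDeriv] using congrFun (iteratedDeriv_comp_line 4 Q (x, 0) (0, 1)) z

lemma Dx2z2_eq_mixedDeriv (Q : ℝ × ℝ → ℂ) (x z : ℝ) :
    Dx2z2 Q x z = mixedDeriv (1, 0) (0, 1) 2 2 Q (x, z) := by
  have inner_deriv (t : ℝ) :
      iteratedDeriv 2 (fun s ↦ Q (t, s)) z = (dirDeriv (0, 1))^[2] Q (t, z) := by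
    simpa using congrFun (iteratedDeriv_comp_line 2 Q (t, 0) (0, 1)) z
  simp only [Dx2z2, inner_deriv]
  simpa [mixedDeriv] using
    congrFun (iteratedDeriv_comp_line 2 ((dirDeriv (0, 1))^[2] Q) (0, z) (1, 0)) x

lemma cornerRemainder_axes (Q : ℝ × ℝ → ℂ) (x z a b h : ℝ) :
    cornerRemainder Q (x, z) (1, 0) (0, 1) a b h
      = Q (x + a * h, z + b * h) + Q (x - a * h, z - b * h)
        + Q (x + a * h, z - b * h) + Q (x - a * h, z + b * h)
        - (4 * Q (x, z)
          + 2 * h ^ 2 * (a ^ 2 * mixedDeriv (1, 0) (0, 1) 2 0 Q (x, z)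
            + b ^ 2 * mixedDeriv (1, 0) (0, 1) 0 2 Q (x, z))
          + h ^ 4 / 6 * (a ^ 4 * Dx4 Q x z + 6 * a ^ 2 * b ^ 2 * Dx2z2 Q x z
            + b ^ 4 * Dz4 Q x z)) := by
  simp only [cornerRemainder, cornerSum, Dx4_eq_mixedDeriv, Dz4_eq_mixedDeriv,
    Dx2z2_eq_mixedDeriv, Prod.smul_mk, Prod.mk_add_mk, Prod.mk_sub_mk, smul_eq_mul, mul_one,
    mul_zero, add_zero, zero_add, sub_zero, zero_sub, ← sub_eq_add_neg, sub_neg_eq_add,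
    Complex.real_smul]
  push_cast
  ring

variable {Q : ℝ × ℝ → ℂ}

theorem I2_expansion (γ : ℝ) (hQ : ContDiff ℝ 6 Q) (x z : ℝ) :
    (fun h : ℝ ↦ I2 γ Q x z h - (Q (x, z) - h ^ 4 / 12 * (Dx4 Q x z + γ ^ 4 * Dz4 Q x z)))
      =O[𝓝 0] fun h ↦ h ^ 6 := by
  have hR := cornerRemainder_isBigO hQ (x, z) (1, 0) (0, 1)
  refine ((((hR 1 0).add (hR 0 γ)).const_mul_left (1 / 6)).sub
    (((hR 2 0).add (hR 0 (2 * γ))).const_mul_left (1 / 24))).congr_left fun h ↦ ?_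
  simp only [cornerRemainder_axes, I2, one_mul, zero_mul, add_zero, sub_zero]
  push_cast
  ring

theorem I3_expansion (γ : ℝ) (hQ : ContDiff ℝ 6 Q) (x z : ℝ) :
    (fun h : ℝ ↦ I3 γ Q x z h
        - (Q (x, z) - h ^ 4 * ((Dx4 Q x z + γ ^ 4 * Dz4 Q x z) / 6 + γ ^ 2 * Dx2z2 Q x z)))
      =O[𝓝 0] fun h ↦ h ^ 6 := by
  have hR := cornerRemainder_isBigO hQ (x, z) (1, 0) (0, 1)
  refine (((hR 1 γ).const_mul_left (1 / 3)).sub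
    ((hR 2 (2 * γ)).const_mul_left (1 / 12))).congr_left fun h ↦ ?_
  simp only [cornerRemainder_axes, I3, one_mul]
  push_cast
  ring

theorem I4_expansion (γ : ℝ) (hQ : ContDiff ℝ 6 Q) (x z : ℝ) :
    (fun h : ℝ ↦ I4 γ Q x z h - (Q (x, z) - h ^ 4 / 6 * (Dx4 Q x z + γ ^ 4 * Dz4 Q x z)))
      =O[𝓝 0] fun h ↦ h ^ 6 := by
  have hR := cornerRemainder_isBigO hQ (x, z) (1, 0) (0, 1)
  refine ((((hR 2 (2 * γ)).const_mul_left (1 / 36)).sub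
    (((hR 1 (2 * γ)).add (hR 2 γ)).const_mul_left (1 / 9))).add
    ((hR 1 γ).const_mul_left (4 / 9))).congr_left fun h ↦ ?_
  simp only [cornerRemainder_axes, I4, one_mul]
  push_cast
  ring

end MassLumping

theorem Istar_expansion_general
    (γ c₁ c₂ c₃ c₄ : ℝ) (hc : c₁ + c₂ + c₃ + c₄ = 1)
    {Q : ℝ × ℝ → ℂ} (hQ : ContDiff ℝ 6 Q) (x z : ℝ) :
    (fun h : ℝ ↦ Istar γ c₁ c₂ c₃ c₄ Q x z h - (Q (x, z)
        - (h : ℂ) ^ 4 * ((((c₂ : ℂ) + 2 * (c₃ : ℂ) + 2 * (c₄ : ℂ)) / 12)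
              * (Dx4 Q x z + (γ : ℂ) ^ 4 * Dz4 Q x z)
            + (c₃ : ℂ) * (γ : ℂ) ^ 2 * Dx2z2 Q x z)))
      =O[𝓝 0] fun h ↦ h ^ 6 := by
  refine ((((I2_expansion γ hQ x z).const_mul_left c₂).add
    ((I3_expansion γ hQ x z).const_mul_left c₃)).add
    ((I4_expansion γ hQ x z).const_mul_left c₄)).congr_left fun h ↦ ?_
  have weights_sum : (c₁ : ℂ) + c₂ + c₃ + c₄ = 1 := mod_cast hc
  rw [Istar]
  linear_combination (-Q (x, z)) * weights_sum

/-- expansion of the weighted mass-lumping operator I* of the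
point-weighting 25-point scheme. -/
theorem Istar_expansion
    (γ : ℝ) (hγ : 0 < γ) (c₁ c₂ c₃ c₄ : ℝ) (hc : c₁ + c₂ + c₃ + c₄ = 1)
    (Q : ℝ × ℝ → ℂ) (hQ : ContDiff ℝ (⊤ : ℕ∞) Q) (x z : ℝ) :
    ∃ C δ : ℝ, 0 < C ∧ 0 < δ ∧ ∀ h : ℝ, 0 < h → h < δ →
      ‖Istar γ c₁ c₂ c₃ c₄ Q x z h - (Q (x, z)
          - (h : ℂ) ^ 4 * ((((c₂ : ℂ) + 2 * (c₃ : ℂ) + 2 * (c₄ : ℂ)) / 12)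
                * (Dx4 Q x z + (γ : ℂ) ^ 4 * Dz4 Q x z)
              + (c₃ : ℂ) * (γ : ℂ) ^ 2 * Dx2z2 Q x z))‖ ≤ C * h ^ 6 := by
  exact exists_pos_bound_of_isBigO_pow <| (Istar_expansion_general γ c₁ c₂ c₃ c₄ hc
    (contDiff_infty.mp hQ 6) x z).mono nhdsWithin_le_nhds

end
end
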